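/- Let τ > 0, κ₁, κ₂, γ ∈ ℝ with κ₂ ≠ 0, κ₁ > |κ₂|, |κ₂| ≤ γ ≤ 2κ₁ − |κ₂|. Let q : [0,1] → ℝ be continuously differentiable with 0 < q₀ ≤ q(x) ≤ q₁ and |q'(x)| ≤ q₂ on [0,1]; let σ : [0,1] → ℝ be twice continuously differentiable with σ(0) = 0, σ(x) > 0 on (0,1], and x·|σ'(x)| ≤ ι_σ·σ(x) on (0,1] for some ι_σ ≥ 0; assume max{ι_σ, q₂/q₀} < 2. Then there exists a constant M > 0, depending only on τ, κ₁, κ₂, γ, q and σ (and not on the solution), such that for every smooth solution u : [0,1] × ℝ → ℝ of u_tt + (σ u_xx)_xx − (q u_x)_x = 0 on (0,1) × (0,∞) with u(0,t) = 0, u_x(0,t) = 0, u_xx(1,t) = 0, and (σ u_xx)_x(1,t) − q(1) u_x(1,t) = κ₁ u_t(1,t) + κ₂ u_t(1,t−τ), the energy E(t) := (1/2)·( ∫₀¹ ( u_t² + σ u_xx² + q u_x² ) dx + γτ ∫₀¹ u_t(1,t−τs)² ds ) satisfies E(t) ≤ e^{1 − t/M}·E(0) for all t ∈ [M, +∞).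 -/

import Mathlib

/-!
The decay is proved with a Lyapunov function. Write `a = u_t(1,t)`, `b = u_t(1,t-τ)`,
`K = κ₁ a + κ₂ b`, and let `A` be twice the mechanical energy and `P = ∫₀¹ u_t(1,t-τs)² ds`.

* Along a solution `E' = -aK + (γ/2)(a² - b²)` (`BeamSlice.energy`, `hasDerivAt_delay`). The gain
  condition makes this quadratic form negative definite, even for `γ` at the ends of its range, so
  `E' ≤ -c(a² + b²)` with `c > 0` (`boundary_dissipation`).
* With `m = max{ι_σ, q₂/q₀} < 2`, the functional `X = ∫ x u_x u_t + (m/4) u u_t` satisfies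
  `X' ≤ boundary terms - (1/2 - m/4) A` (`BeamSlice.multiplier`); the structural condition
  is exactly what makes the coefficient positive. The boundary terms are absorbed by
  `a² + b²` and a fraction of `A` (`absorb_boundary`), using `u(1,t)² ≤ ∫ u_x²`.
* `D = τ ∫ (1-s) u_t(1,t-τs)² ds` satisfies `D' = a² - P` (`hasDerivAt_delay_weighted`), which
  supplies the decay of the delay part of the energy.

For `N` large, `L = N E + X + D` satisfies `E ≤ L ≤ C₂ E` and `L' ≤ -δ L` for `t > 0`, whence
`E(t) ≤ C₂ e^{-δt} E(0)`. The choice `M = (1 + log C₂) / δ` turns this into the claimed form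
(`exists_rate`).

Each spatial identity is a pointwise one: the integrand is the derivative of an explicit flux on
the open interval, so the equation is needed only there, and the degeneracy `σ(0) = 0` only makes
boundary terms vanish.
-/

open MeasureTheory

/-- Partial derivative in the space variable of `u : ℝ → ℝ → ℝ`, `u = u(x, t)`. -/
noncomputable def pdx (u : ℝ → ℝ → ℝ) (x t : ℝ) : ℝ := deriv (fun y => u y t) x

/-- Partial derivative in the time variable of `u : ℝ → ℝ → ℝ`, `u = u(x, t)`. -/
noncomputable def pdt (u : ℝ → ℝ → ℝ) (x t : ℝ) : ℝ := deriv (fun s => u x s) t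

/-- The energy of the delayed degenerate beam system:
`E(t) = ½(∫₀¹ (u_t² + σ u_xx² + q u_x²) dx + γτ ∫₀¹ u_t(1, t-τs)² ds)`. -/
noncomputable def beamEnergy (σ q : ℝ → ℝ) (γ τ : ℝ) (u : ℝ → ℝ → ℝ) (t : ℝ) : ℝ :=
  (1 / 2) * ((∫ x in (0:ℝ)..1,
      ((pdt u x t) ^ 2 + σ x * (pdx (pdx u) x t) ^ 2 + q x * (pdx u x t) ^ 2))
    + γ * τ * ∫ s in (0:ℝ)..1, (pdt u 1 (t - τ * s)) ^ 2)

/-! ### Calculus of the partial derivatives of a smooth function -/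

lemma pdx_eq {u : ℝ → ℝ → ℝ} (hu : ContDiff ℝ (⊤ : ℕ∞) (Function.uncurry u)) (x t : ℝ) :
    HasDerivAt (fun y => u y t) (fderiv ℝ (Function.uncurry u) (x, t) (1, 0)) x := by
  have h1 : HasFDerivAt (Function.uncurry u) (fderiv ℝ (Function.uncurry u) (x, t)) (x, t) :=
    (hu.differentiable (by simp) _).hasFDerivAt
  have h2 : HasDerivAt (fun y : ℝ => (y, t)) ((1 : ℝ), (0 : ℝ)) x :=
    (hasDerivAt_id x).prodMk (hasDerivAt_const x t)
  exact h1.comp_hasDerivAt x h2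

lemma pdt_eq {u : ℝ → ℝ → ℝ} (hu : ContDiff ℝ (⊤ : ℕ∞) (Function.uncurry u)) (x t : ℝ) :
    HasDerivAt (fun s => u x s) (fderiv ℝ (Function.uncurry u) (x, t) (0, 1)) t := by
  have h1 : HasFDerivAt (Function.uncurry u) (fderiv ℝ (Function.uncurry u) (x, t)) (x, t) :=
    (hu.differentiable (by simp) _).hasFDerivAt
  have h2 : HasDerivAt (fun s : ℝ => (x, s)) ((0 : ℝ), (1 : ℝ)) t :=
    (hasDerivAt_const t x).prodMk (hasDerivAt_id t)
  exact h1.comp_hasDerivAt t h2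

lemma hasDerivAt_pdx {u : ℝ → ℝ → ℝ} (hu : ContDiff ℝ (⊤ : ℕ∞) (Function.uncurry u))
    (x t : ℝ) : HasDerivAt (fun y => u y t) (pdx u x t) x :=
  (pdx_eq hu x t).differentiableAt.hasDerivAt

lemma hasDerivAt_pdt {u : ℝ → ℝ → ℝ} (hu : ContDiff ℝ (⊤ : ℕ∞) (Function.uncurry u))
    (x t : ℝ) : HasDerivAt (fun s => u x s) (pdt u x t) t :=
  (pdt_eq hu x t).differentiableAt.hasDerivAt

lemma uncurry_pdx {u : ℝ → ℝ → ℝ} (hu : ContDiff ℝ (⊤ : ℕ∞) (Function.uncurry u)) :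
    Function.uncurry (pdx u) = fun p => fderiv ℝ (Function.uncurry u) p (1, 0) := by
  ext ⟨x, t⟩
  exact (pdx_eq hu x t).deriv

lemma uncurry_pdt {u : ℝ → ℝ → ℝ} (hu : ContDiff ℝ (⊤ : ℕ∞) (Function.uncurry u)) :
    Function.uncurry (pdt u) = fun p => fderiv ℝ (Function.uncurry u) p (0, 1) := by
  ext ⟨x, t⟩
  exact (pdt_eq hu x t).deriv

lemma contDiff_pdx {u : ℝ → ℝ → ℝ} (hu : ContDiff ℝ (⊤ : ℕ∞) (Function.uncurry u)) :
    ContDiff ℝ (⊤ : ℕ∞) (Function.uncurry (pdx u)) := by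
  rw [uncurry_pdx hu]
  exact (hu.fderiv_right (m := (⊤ : ℕ∞)) (by simp)).clm_apply contDiff_const

lemma contDiff_pdt {u : ℝ → ℝ → ℝ} (hu : ContDiff ℝ (⊤ : ℕ∞) (Function.uncurry u)) :
    ContDiff ℝ (⊤ : ℕ∞) (Function.uncurry (pdt u)) := by
  rw [uncurry_pdt hu]
  exact (hu.fderiv_right (m := (⊤ : ℕ∞)) (by simp)).clm_apply contDiff_const

lemma pdt_pdx_comm {u : ℝ → ℝ → ℝ} (hu : ContDiff ℝ (⊤ : ℕ∞) (Function.uncurry u)) :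
    pdt (pdx u) = pdx (pdt u) := by
  ext x t
  have hd : DifferentiableAt ℝ (fderiv ℝ (Function.uncurry u)) (x, t) :=
    (hu.fderiv_right (m := (⊤ : ℕ∞)) (by simp)).differentiable (by simp) _
  have h1 := (pdt_eq (contDiff_pdx hu) x t).deriv
  have h2 := (pdx_eq (contDiff_pdt hu) x t).deriv
  rw [uncurry_pdx hu] at h1
  rw [uncurry_pdt hu] at h2
  rw [fderiv_clm_apply hd (differentiableAt_const _)] at h1 h2
  have hs : IsSymmSndFDerivAt ℝ (Function.uncurry u) (x, t) :=
    hu.contDiffAt.isSymmSndFDerivAt (by simpa using WithTop.coe_le_coe.2 (le_top (a := (2 : ℕ∞))))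
  unfold pdt pdx at *
  rw [h1, h2]
  simpa using hs (0, 1) (1, 0)

lemma continuous_slice {u : ℝ → ℝ → ℝ} (hu : ContDiff ℝ (⊤ : ℕ∞) (Function.uncurry u))
    (t : ℝ) : Continuous fun x => u x t :=
  hu.continuous.comp (by fun_prop : Continuous fun x : ℝ => (x, t))

/-- Differentiation under the integral sign for jointly continuous data. -/
lemma hasDerivAt_integral_unit {f f' : ℝ → ℝ → ℝ} (hf : Continuous (Function.uncurry f))
    (hf' : Continuous (Function.uncurry f'))
    (hd : ∀ x t, HasDerivAt (fun s => f x s) (f' x t) t) (t : ℝ) :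
    HasDerivAt (fun s => ∫ x in (0:ℝ)..1, f x s) (∫ x in (0:ℝ)..1, f' x t) t := by
  have hcx : ∀ {g : ℝ → ℝ → ℝ}, Continuous (Function.uncurry g) → ∀ s,
      Continuous fun x => g x s := fun hg s =>
    hg.comp (by fun_prop : Continuous fun x : ℝ => (x, s))
  obtain ⟨C, hC⟩ := ((isCompact_Icc (a := (0:ℝ)) (b := 1)).prod
    (isCompact_Icc (a := t - 1) (b := t + 1))).exists_bound_of_continuousOn
      hf'.continuousOn
  refine (intervalIntegral.hasDerivAt_integral_of_dominated_loc_of_deriv_le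
    (F := fun s x => f x s) (F' := fun s x => f' x s) (bound := fun _ => C)
    (s := Set.Icc (t - 1) (t + 1)) (Icc_mem_nhds (by linarith) (by linarith))
    (Filter.Eventually.of_forall fun s => (hcx hf s).aestronglyMeasurable)
    ((hcx hf t).intervalIntegrable 0 1) (hcx hf' t).aestronglyMeasurable
    (Filter.Eventually.of_forall fun x hx s hs => ?_) (by simp)
    (Filter.Eventually.of_forall fun x _ s _ => hd x s)).2
  rw [Set.uIoc_of_le zero_le_one] at hx
  exact hC (x, s) ⟨⟨hx.1.le, hx.2⟩, hs⟩

/-! ### Integral identities on one time slice -/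

/-- One time slice of a solution: `v = u(·,t)`, `w = u_t(·,t)`, `z = u_tt(·,t)`, with
`vᵢ`, `wᵢ` their space derivatives and `K` the boundary feedback at `x = 1`. The regularity
required is what the integrations by parts use; the equation is imposed on the open interval. -/
structure BeamSlice (σ q v v1 v2 v3 w w1 w2 z : ℝ → ℝ) (K : ℝ) : Prop where
  dv : ∀ x, HasDerivAt v (v1 x) x
  dv1 : ∀ x, HasDerivAt v1 (v2 x) x
  dv2 : ∀ x, HasDerivAt v2 (v3 x) x
  dw : ∀ x, HasDerivAt w (w1 x) x
  dw1 : ∀ x, HasDerivAt w1 (w2 x) x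
  cw2 : Continuous w2
  cz : Continuous z
  cv2 : ContDiff ℝ 2 v2
  pde : ∀ x ∈ Set.Ioo (0:ℝ) 1,
    z x + deriv (deriv (fun y => σ y * v2 y)) x - deriv (fun y => q y * v1 y) x = 0
  v0 : v 0 = 0
  v10 : v1 0 = 0
  w0 : w 0 = 0
  w10 : w1 0 = 0
  v21 : v2 1 = 0
  bc : deriv (fun y => σ y * v2 y) 1 - q 1 * v1 1 = K

section slice

variable {σ q v v1 v2 v3 w w1 w2 z : ℝ → ℝ} {K : ℝ}

/-- The shear force `G = (σ v'')' - q v'` satisfies `G' = -z` in the interior. -/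
lemma BeamSlice.shear (h : BeamSlice σ q v v1 v2 v3 w w1 w2 z K)
    (hσ : ContDiff ℝ 2 σ) (hq : ContDiff ℝ 1 q) :
    ∃ G : ℝ → ℝ, Continuous G ∧ G 1 = K ∧ (∀ x ∈ Set.Ioo (0:ℝ) 1, HasDerivAt G (-z x) x) ∧
      ∀ x, HasDerivAt (fun y => σ y * v2 y) (G x + q x * v1 x) x := by
  have hS : ContDiff ℝ 2 (fun y => σ y * v2 y) := hσ.mul h.cv2
  have hS' : ContDiff ℝ 1 (deriv (fun y => σ y * v2 y)) := by
    have : ContDiff ℝ (1 + 1) (fun y => σ y * v2 y) := by simpa [one_add_one_eq_two] using hS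
    exact (contDiff_succ_iff_deriv.1 this).2.2
  have hv1 : Differentiable ℝ v1 := fun x => (h.dv1 x).differentiableAt
  have hq1 : Differentiable ℝ q := hq.differentiable (by simp)
  refine ⟨fun x => deriv (fun y => σ y * v2 y) x - q x * v1 x,
    hS'.continuous.sub (hq1.continuous.mul hv1.continuous), h.bc, fun x hx => ?_, fun x => ?_⟩
  · have e1 := (hS'.differentiable (by simp) x).hasDerivAt
    have e2 := ((hq1.mul hv1) x).hasDerivAt
    refine (e1.sub e2).congr_deriv ?_
    have := h.pde x hx
    have e3 : deriv (q * v1) x = deriv (fun y => q y * v1 y) x := rfl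
    rw [e3]
    linarith
  · have := (hS.differentiable (by simp) x).hasDerivAt
    simpa using this

lemma BeamSlice.continuity (h : BeamSlice σ q v v1 v2 v3 w w1 w2 z K) :
    Continuous v ∧ Continuous v1 ∧ Continuous v2 ∧ Continuous w ∧ Continuous w1 :=
  ⟨continuous_iff_continuousAt.2 fun x => (h.dv x).continuousAt,
    continuous_iff_continuousAt.2 fun x => (h.dv1 x).continuousAt,
    continuous_iff_continuousAt.2 fun x => (h.dv2 x).continuousAt,
    continuous_iff_continuousAt.2 fun x => (h.dw x).continuousAt,
    continuous_iff_continuousAt.2 fun x => (h.dw1 x).continuousAt⟩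

/-- Energy balance: the derivative of the mechanical energy density integrates to the work
of the boundary feedback. The flux is `-w G + σ v'' w'`. -/
lemma BeamSlice.energy (h : BeamSlice σ q v v1 v2 v3 w w1 w2 z K)
    (hσ : ContDiff ℝ 2 σ) (hσ0 : σ 0 = 0) (hq : ContDiff ℝ 1 q) :
    ∫ x in (0:ℝ)..1, (w x * z x + σ x * (v2 x * w2 x) + q x * (v1 x * w1 x))
      = -(w 1 * K) := by
  obtain ⟨G, hGc, hG1, hG, hS⟩ := h.shear hσ hq
  obtain ⟨cv, cv1, cv2, cw, cw1⟩ := h.continuity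
  have cσ := hσ.continuous
  have cq := hq.continuous
  have cw2 := h.cw2
  have cz := h.cz
  rw [intervalIntegral.integral_eq_sub_of_hasDerivAt_of_le zero_le_one
    (f := fun x => -(w x * G x) + (σ x * v2 x) * w1 x)]
  · simp [h.v21, hσ0, h.w0, hG1]
  · fun_prop
  · intro x hx
    refine (((h.dw x).mul (hG x hx)).neg.add ((hS x).mul (h.dw1 x))).congr_deriv ?_
    ring
  · exact Continuous.intervalIntegrable (by fun_prop) _ _

/-- The multiplier estimate: `∫ (x v' w)_t + θ (v w)_t`, with `θ = m / 4` chosen so that all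
three energy densities get a coefficient at most `-(1/2 - m/4)`. -/
lemma BeamSlice.multiplier (h : BeamSlice σ q v v1 v2 v3 w w1 w2 z K)
    (hσ : ContDiff ℝ 2 σ) (hσ0 : σ 0 = 0) (hq : ContDiff ℝ 1 q) {m : ℝ}
    (hσn : ∀ x ∈ Set.Icc (0:ℝ) 1, 0 ≤ σ x)
    (hσm : ∀ x ∈ Set.Icc (0:ℝ) 1, x * deriv σ x ≤ m * σ x)
    (hqm : ∀ x ∈ Set.Icc (0:ℝ) 1, x * deriv q x ≤ m * q x) :
    ∫ x in (0:ℝ)..1, (x * (w1 x * w x + v1 x * z x) + m / 4 * (w x * w x + v x * z x))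
      ≤ (w 1) ^ 2 / 2 - v1 1 * K - q 1 * (v1 1) ^ 2 / 2 - m / 4 * (v 1 * K)
        - (1 / 2 - m / 4) *
          ∫ x in (0:ℝ)..1, ((w x) ^ 2 + σ x * (v2 x) ^ 2 + q x * (v1 x) ^ 2) := by
  obtain ⟨G, hGc, hG1, hG, hS⟩ := h.shear hσ hq
  obtain ⟨cv, cv1, cv2, cw, cw1⟩ := h.continuity
  have cσ := hσ.continuous
  have cq := hq.continuous
  have cw2 := h.cw2
  have cz := h.cz
  have cσ' : Continuous (deriv σ) := hσ.continuous_deriv (by simp)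
  have cq' : Continuous (deriv q) := hq.continuous_deriv (by simp)
  have dσ : ∀ x, HasDerivAt σ (deriv σ x) x := fun x =>
    (hσ.differentiable (by simp) x).hasDerivAt
  have dq : ∀ x, HasDerivAt q (deriv q x) x := fun x =>
    (hq.differentiable (by simp) x).hasDerivAt
  have hσ' : ∀ x, deriv σ x * v2 x + σ x * v3 x = G x + q x * v1 x := fun x =>
    ((dσ x).mul (h.dv2 x)).unique (hS x)
  -- `ρ` is the exact density left over after removing the flux derivative
  set ρ : ℝ → ℝ := fun x => (1 / 2 - m / 4) * (w x) ^ 2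
    + (3 / 2 + m / 4) * (σ x * (v2 x) ^ 2) - x * deriv σ x * (v2 x) ^ 2 / 2
    + (1 / 2 + m / 4) * (q x * (v1 x) ^ 2) - x * deriv q x * (v1 x) ^ 2 / 2 with hρ
  have cρ : Continuous ρ := by rw [hρ]; fun_prop
  have key : ∫ x in (0:ℝ)..1,
      (x * (w1 x * w x + v1 x * z x) + m / 4 * (w x * w x + v x * z x) + ρ x)
      = (w 1) ^ 2 / 2 - v1 1 * K - q 1 * (v1 1) ^ 2 / 2 - m / 4 * (v 1 * K) := by
    rw [intervalIntegral.integral_eq_sub_of_hasDerivAt_of_le zero_le_one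
      (f := fun x => x * (w x * w x) / 2 - x * (v1 x * G x) + v1 x * (σ x * v2 x)
        + x * ((σ x * v2 x) * v2 x) / 2 - x * (q x * (v1 x * v1 x)) / 2
        + m / 4 * (v1 x * (σ x * v2 x) - v x * G x))]
    · simp [h.v21, hσ0, hG1, h.v10, h.v0]
      ring
    · fun_prop
    · intro x hx
      have i := hasDerivAt_id' x
      have d1 := (i.mul ((h.dw x).mul (h.dw x))).div_const 2
      have d2 := i.mul ((h.dv1 x).mul (hG x hx))
      have d3 := (h.dv1 x).mul (hS x)
      have d4 := (i.mul ((hS x).mul (h.dv2 x))).div_const 2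
      have d5 := (i.mul ((dq x).mul ((h.dv1 x).mul (h.dv1 x)))).div_const 2
      have d6 := (d3.sub ((h.dv x).mul (hG x hx))).const_mul (m / 4)
      refine (((((d1.sub d2).add d3).add d4).sub d5).add d6).congr_deriv ?_
      simp only [hρ, Pi.mul_apply]
      linear_combination (x * v2 x / 2) * hσ' x
    · exact Continuous.intervalIntegrable (by fun_prop) _ _
  have hmono : (1 / 2 - m / 4) *
      ∫ x in (0:ℝ)..1, ((w x) ^ 2 + σ x * (v2 x) ^ 2 + q x * (v1 x) ^ 2)
      ≤ ∫ x in (0:ℝ)..1, ρ x := by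
    rw [← intervalIntegral.integral_const_mul]
    refine intervalIntegral.integral_mono_on zero_le_one
      (Continuous.intervalIntegrable (by fun_prop) _ _)
      (cρ.intervalIntegrable _ _) fun x hx => ?_
    have a1 := mul_le_mul_of_nonneg_right (hσm x hx) (sq_nonneg (v2 x))
    have a2 := mul_le_mul_of_nonneg_right (hqm x hx) (sq_nonneg (v1 x))
    have a3 := mul_nonneg (hσn x hx) (sq_nonneg (v2 x))
    simp only [hρ]
    nlinarith
  rw [intervalIntegral.integral_add (Continuous.intervalIntegrable (by fun_prop) _ _)
    (cρ.intervalIntegrable _ _)] at key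
  linarith

end slice

/-- Poincaré-type inequality for functions vanishing at the left endpoint. -/
lemma sq_le_integral_deriv_sq {v v1 : ℝ → ℝ} (dv : ∀ x, HasDerivAt v (v1 x) x)
    (cv1 : Continuous v1) (v0 : v 0 = 0) {x : ℝ} (hx : x ∈ Set.Icc (0:ℝ) 1) :
    (v x) ^ 2 ≤ ∫ y in (0:ℝ)..1, (v1 y) ^ 2 := by
  have ii : ∀ a b, IntervalIntegrable (fun y => (v1 y) ^ 2) volume a b := fun a b =>
    Continuous.intervalIntegrable (by fun_prop) _ _
  have h1 : ∫ y in (0:ℝ)..x, v1 y = v x := by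
    rw [intervalIntegral.integral_eq_sub_of_hasDerivAt (fun y _ => dv y)
      (cv1.intervalIntegrable _ _), v0, sub_zero]
  -- Cauchy-Schwarz: integrate `(v' - λ)² ≥ 0` with `λ = v x`
  have h2 : 0 ≤ ∫ y in (0:ℝ)..x, ((v1 y) ^ 2 - (2 * v x * v1 y - (v x) ^ 2)) :=
    intervalIntegral.integral_nonneg hx.1 fun y _ => by nlinarith [sq_nonneg (v1 y - v x)]
  rw [intervalIntegral.integral_sub (ii _ _)
      (Continuous.intervalIntegrable (by fun_prop) _ _),
    intervalIntegral.integral_sub (Continuous.intervalIntegrable (by fun_prop) _ _)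
      (Continuous.intervalIntegrable (by fun_prop) _ _),
    intervalIntegral.integral_const_mul, h1, intervalIntegral.integral_const] at h2
  have h3 : 0 ≤ ∫ y in x..1, (v1 y) ^ 2 :=
    intervalIntegral.integral_nonneg hx.2 fun y _ => sq_nonneg _
  rw [← intervalIntegral.integral_add_adjacent_intervals (ii 0 x) (ii x 1)]
  simp only [sub_zero, smul_eq_mul] at h2
  nlinarith [mul_nonneg (sub_nonneg.2 hx.2) (sq_nonneg (v x))]

/-! ### Boundary dissipation and exponential decay -/

/-- The boundary dissipation is definite: the gain condition makes
`(κ₁ - γ/2) a² + κ₂ a b + (γ/2) b²` positive definite, also for `γ` at the ends of its range. -/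
lemma boundary_dissipation {κ₁ κ₂ γ : ℝ} (hκ₂ : κ₂ ≠ 0) (hκ : |κ₂| < κ₁)
    (hγ₁ : |κ₂| ≤ γ) (hγ₂ : γ ≤ 2 * κ₁ - |κ₂|) :
    ∃ c : ℝ, 0 < c ∧ ∀ a b : ℝ,
      -(a * (κ₁ * a + κ₂ * b)) + γ / 2 * (a ^ 2 - b ^ 2) ≤ -c * (a ^ 2 + b ^ 2) := by
  have hk : 0 < |κ₂| := abs_pos.2 hκ₂
  have hsq : |κ₂| ^ 2 = κ₂ ^ 2 := sq_abs κ₂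
  set P := κ₁ - γ / 2 with hP
  set Q := γ / 2 with hQ
  have hP0 : 0 < P := by linarith
  have hQ0 : 0 < Q := by linarith
  have hD : 0 < P * Q - κ₂ ^ 2 / 4 := by
    nlinarith [mul_nonneg (sub_nonneg.2 hγ₁) (sub_nonneg.2 hγ₂), mul_pos hk (sub_pos.2 hκ)]
  have hs : 0 < P + Q := by linarith
  obtain ⟨c, hc⟩ : ∃ c, c = (P * Q - κ₂ ^ 2 / 4) / (P + Q) := ⟨_, rfl⟩
  have hc0 : 0 < c := hc ▸ div_pos hD hs
  have hcm : c * (P + Q) = P * Q - κ₂ ^ 2 / 4 := by rw [hc]; field_simp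
  have hcP : c < P := by
    by_contra! hle
    nlinarith [mul_le_mul_of_nonneg_right hle hs.le, sq_nonneg κ₂, mul_pos hP0 hP0]
  refine ⟨c, hc0, fun a b => ?_⟩
  have hPc : 0 < P - c := sub_pos.2 hcP
  have h1 : 0 ≤ 4 * (P - c) * ((P - c) * a ^ 2 + κ₂ * (a * b) + (Q - c) * b ^ 2) := by
    have : 4 * (P - c) * ((P - c) * a ^ 2 + κ₂ * (a * b) + (Q - c) * b ^ 2)
        = (2 * (P - c) * a + κ₂ * b) ^ 2 + 4 * c ^ 2 * b ^ 2 := by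
      linear_combination (-4 * b ^ 2) * hcm
    rw [this]; positivity
  have h2 := nonneg_of_mul_nonneg_right h1 (by linarith)
  have h3 : κ₁ = P + Q := by rw [hP]; ring
  rw [h3]
  nlinarith

/-- Grönwall's inequality for `L' ≤ -δ L`, imposed only at positive times. -/
lemma exp_decay_of_deriv_le {L L' : ℝ → ℝ} {δ : ℝ} (hL : ∀ t, HasDerivAt L (L' t) t)
    (hle : ∀ t, 0 < t → L' t ≤ -δ * L t) {t : ℝ} (ht : 0 ≤ t) :
    L t ≤ Real.exp (-(δ * t)) * L 0 := by
  have hd : ∀ s, HasDerivAt (fun s => Real.exp (δ * s) * L s)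
      (Real.exp (δ * s) * (δ * 1) * L s + Real.exp (δ * s) * L' s) s := fun s =>
    (((hasDerivAt_id' s).const_mul δ).exp).mul (hL s)
  have hanti : AntitoneOn (fun s => Real.exp (δ * s) * L s) (Set.Ici 0) := by
    refine antitoneOn_of_deriv_nonpos (convex_Ici 0)
      (fun s _ => (hd s).continuousAt.continuousWithinAt)
      (fun s _ => (hd s).differentiableAt.differentiableWithinAt) fun s hs => ?_
    rw [interior_Ici] at hs
    rw [(hd s).deriv]
    nlinarith [hle s hs, Real.exp_pos (δ * s)]
  have h := hanti (Set.mem_Ici.2 le_rfl) (Set.mem_Ici.2 ht) ht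
  simp only [mul_zero, Real.exp_zero, one_mul] at h
  rw [Real.exp_neg, inv_mul_eq_div, le_div_iff₀ (Real.exp_pos _)]
  linarith

/-! ### Time derivatives of the pieces of the Lyapunov function -/

section delay

variable {p p' : ℝ → ℝ}

/-- The delay energy is transported: its time derivative is inflow minus outflow. -/
lemma hasDerivAt_delay (hp : ∀ r, HasDerivAt p (p' r) r) (cp' : Continuous p') (τ t : ℝ) :
    HasDerivAt (fun t => τ * ∫ s in (0:ℝ)..1, (p (t - τ * s)) ^ 2)
      ((p t) ^ 2 - (p (t - τ)) ^ 2) t := by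
  have cp : Continuous p := continuous_iff_continuousAt.2 fun r => (hp r).continuousAt
  have h := (hasDerivAt_integral_unit (f := fun s t => (p (t - τ * s)) ^ 2)
    (f' := fun s t => 2 * p (t - τ * s) * p' (t - τ * s))
    (by simp only [Function.uncurry_def]; fun_prop)
    (by simp only [Function.uncurry_def]; fun_prop)
    (fun s t => (((hp (t - τ * s)).comp t
      ((hasDerivAt_id' t).sub_const (τ * s))).pow 2).congr_deriv (by simp))
    t).const_mul τ
  refine h.congr_deriv ?_
  rw [← intervalIntegral.integral_const_mul,
    intervalIntegral.integral_eq_sub_of_hasDerivAt_of_le zero_le_one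
      (f := fun s => -(p (t - τ * s)) ^ 2)]
  · simp; ring
  · fun_prop
  · intro s _
    have d : HasDerivAt (fun s => t - τ * s) (-(τ * 1)) s :=
      ((hasDerivAt_id' s).const_mul τ).const_sub t
    refine (((hp (t - τ * s)).comp s d).pow 2).neg.congr_deriv ?_
    simp; ring
  · exact Continuous.intervalIntegrable (by fun_prop) _ _

/-- The weight `1 - s` produces the missing dissipation of the delay energy. -/
lemma hasDerivAt_delay_weighted (hp : ∀ r, HasDerivAt p (p' r) r) (cp' : Continuous p')
    (τ t : ℝ) :
    HasDerivAt (fun t => τ * ∫ s in (0:ℝ)..1, (1 - s) * (p (t - τ * s)) ^ 2)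
      ((p t) ^ 2 - ∫ s in (0:ℝ)..1, (p (t - τ * s)) ^ 2) t := by
  have cp : Continuous p := continuous_iff_continuousAt.2 fun r => (hp r).continuousAt
  have h := (hasDerivAt_integral_unit (f := fun s t => (1 - s) * (p (t - τ * s)) ^ 2)
    (f' := fun s t => (1 - s) * (2 * p (t - τ * s) * p' (t - τ * s)))
    (by simp only [Function.uncurry_def]; fun_prop)
    (by simp only [Function.uncurry_def]; fun_prop)
    (fun s t => ((((hp (t - τ * s)).comp t
      ((hasDerivAt_id' t).sub_const (τ * s))).pow 2).const_mul (1 - s)).congr_deriv (by simp))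
    t).const_mul τ
  refine h.congr_deriv ?_
  rw [eq_sub_iff_add_eq, ← intervalIntegral.integral_const_mul,
    ← intervalIntegral.integral_add (Continuous.intervalIntegrable (by fun_prop) _ _)
      (Continuous.intervalIntegrable (by fun_prop) _ _),
    intervalIntegral.integral_eq_sub_of_hasDerivAt_of_le zero_le_one
      (f := fun s => -((1 - s) * (p (t - τ * s)) ^ 2))]
  · simp
  · fun_prop
  · intro s _
    have d : HasDerivAt (fun s => t - τ * s) (-(τ * 1)) s :=
      ((hasDerivAt_id' s).const_mul τ).const_sub t
    refine (((hasDerivAt_id' s).const_sub 1).mul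
      (((hp (t - τ * s)).comp s d).pow 2)).neg.congr_deriv ?_
    simp; ring
  · exact Continuous.intervalIntegrable (by fun_prop) _ _

end delay

section solution

variable {σ q : ℝ → ℝ} {u : ℝ → ℝ → ℝ}

lemma hasDerivAt_mechanical (hu : ContDiff ℝ (⊤ : ℕ∞) (Function.uncurry u))
    (cσ : Continuous σ) (cq : Continuous q) (t : ℝ) :
    HasDerivAt (fun t => ∫ x in (0:ℝ)..1,
        ((pdt u x t) ^ 2 + σ x * (pdx (pdx u) x t) ^ 2 + q x * (pdx u x t) ^ 2))
      (2 * ∫ x in (0:ℝ)..1, (pdt u x t * pdt (pdt u) x t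
        + σ x * (pdx (pdx u) x t * pdx (pdx (pdt u)) x t)
        + q x * (pdx u x t * pdx (pdt u) x t))) t := by
  rw [← intervalIntegral.integral_const_mul]
  have c1 := (contDiff_pdt hu).continuous
  have c2 := (contDiff_pdx hu).continuous
  have c3 := (contDiff_pdx (contDiff_pdx hu)).continuous
  have c4 := (contDiff_pdt (contDiff_pdt hu)).continuous
  have c5 := (contDiff_pdx (contDiff_pdt hu)).continuous
  have c6 := (contDiff_pdx (contDiff_pdx (contDiff_pdt hu))).continuous
  simp only [Function.uncurry_def] at c1 c2 c3 c4 c5 c6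
  refine hasDerivAt_integral_unit
    (f := fun x t => (pdt u x t) ^ 2 + σ x * (pdx (pdx u) x t) ^ 2 + q x * (pdx u x t) ^ 2)
    (f' := fun x t => 2 * (pdt u x t * pdt (pdt u) x t
        + σ x * (pdx (pdx u) x t * pdx (pdx (pdt u)) x t)
        + q x * (pdx u x t * pdx (pdt u) x t)))
    (by simp only [Function.uncurry_def]; fun_prop)
    (by simp only [Function.uncurry_def]; fun_prop) (fun x t => ?_) t
  have d1 := hasDerivAt_pdt (contDiff_pdt hu) x t
  have d2 := hasDerivAt_pdt (contDiff_pdx hu) x t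
  have d3 := hasDerivAt_pdt (contDiff_pdx (contDiff_pdx hu)) x t
  rw [pdt_pdx_comm hu] at d2
  rw [pdt_pdx_comm (contDiff_pdx hu), pdt_pdx_comm hu] at d3
  refine (((d1.pow 2).add ((d3.pow 2).const_mul (σ x))).add
    ((d2.pow 2).const_mul (q x))).congr_deriv ?_
  simp; ring

lemma hasDerivAt_cross (hu : ContDiff ℝ (⊤ : ℕ∞) (Function.uncurry u)) (θ t : ℝ) :
    HasDerivAt (fun t => ∫ x in (0:ℝ)..1,
        (x * (pdx u x t * pdt u x t) + θ * (u x t * pdt u x t)))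
      (∫ x in (0:ℝ)..1, (x * (pdx (pdt u) x t * pdt u x t + pdx u x t * pdt (pdt u) x t)
        + θ * (pdt u x t * pdt u x t + u x t * pdt (pdt u) x t))) t := by
  have c0 := hu.continuous
  have c1 := (contDiff_pdt hu).continuous
  have c2 := (contDiff_pdx hu).continuous
  have c4 := (contDiff_pdt (contDiff_pdt hu)).continuous
  have c5 := (contDiff_pdx (contDiff_pdt hu)).continuous
  simp only [Function.uncurry_def] at c0 c1 c2 c4 c5
  refine hasDerivAt_integral_unit
    (f := fun x t => x * (pdx u x t * pdt u x t) + θ * (u x t * pdt u x t))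
    (f' := fun x t => x * (pdx (pdt u) x t * pdt u x t + pdx u x t * pdt (pdt u) x t)
        + θ * (pdt u x t * pdt u x t + u x t * pdt (pdt u) x t))
    (by simp only [Function.uncurry_def]; fun_prop)
    (by simp only [Function.uncurry_def]; fun_prop) (fun x t => ?_) t
  have d0 := hasDerivAt_pdt hu x t
  have d1 := hasDerivAt_pdt (contDiff_pdt hu) x t
  have d2 := hasDerivAt_pdt (contDiff_pdx hu) x t
  rw [pdt_pdx_comm hu] at d2
  exact ((d2.mul d1).const_mul x).add ((d0.mul d1).const_mul θ)

lemma beamSlice_of_solution (hu : ContDiff ℝ (⊤ : ℕ∞) (Function.uncurry u)) {K t : ℝ}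
    (hpde : ∀ x ∈ Set.Ioo (0:ℝ) 1,
      pdt (pdt u) x t
        + pdx (pdx (fun y s => σ y * pdx (pdx u) y s)) x t
        - pdx (fun y s => q y * pdx u y s) x t = 0)
    (h0 : ∀ t : ℝ, u 0 t = 0) (h0' : ∀ t : ℝ, pdx u 0 t = 0)
    (h1 : ∀ t : ℝ, pdx (pdx u) 1 t = 0)
    (hK : pdx (fun y s => σ y * pdx (pdx u) y s) 1 t - q 1 * pdx u 1 t = K) :
    BeamSlice σ q (fun x => u x t) (fun x => pdx u x t) (fun x => pdx (pdx u) x t)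
      (fun x => pdx (pdx (pdx u)) x t) (fun x => pdt u x t) (fun x => pdx (pdt u) x t)
      (fun x => pdx (pdx (pdt u)) x t) (fun x => pdt (pdt u) x t) K where
  dv x := hasDerivAt_pdx hu x t
  dv1 x := hasDerivAt_pdx (contDiff_pdx hu) x t
  dv2 x := hasDerivAt_pdx (contDiff_pdx (contDiff_pdx hu)) x t
  dw x := hasDerivAt_pdx (contDiff_pdt hu) x t
  dw1 x := hasDerivAt_pdx (contDiff_pdx (contDiff_pdt hu)) x t
  cw2 := continuous_slice (contDiff_pdx (contDiff_pdx (contDiff_pdt hu))) t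
  cz := continuous_slice (contDiff_pdt (contDiff_pdt hu)) t
  cv2 := by
    have h := (contDiff_pdx (contDiff_pdx hu)).comp
      (contDiff_id.prodMk contDiff_const : ContDiff ℝ (⊤ : ℕ∞) fun x : ℝ => (x, t))
    exact h.of_le (by simpa using WithTop.coe_le_coe.2 (le_top (a := (2 : ℕ∞))))
  pde := hpde
  v0 := h0 t
  v10 := h0' t
  w0 := by simp [pdt, h0]
  w10 := by
    rw [← pdt_pdx_comm hu]
    simp [pdt, h0']
  v21 := h1 t
  bc := hK

end solution

/-! ### Bounds of the cross terms, boundary terms and decay rate -/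

/-- Bound of the cross terms `∫ x v' w + θ v w` by the mechanical energy. -/
lemma abs_cross_le {v v1 w q : ℝ → ℝ} (dv : ∀ x, HasDerivAt v (v1 x) x)
    (cv1 : Continuous v1) (v0 : v 0 = 0) (cw : Continuous w) (cq : Continuous q)
    {q₀ θ : ℝ} (hq₀ : 0 < q₀) (hq : ∀ x ∈ Set.Icc (0:ℝ) 1, q₀ ≤ q x)
    (hθ : 0 ≤ θ) (hθ1 : θ ≤ 1) :
    |∫ x in (0:ℝ)..1, (x * (v1 x * w x) + θ * (v x * w x))|
      ≤ (1 + 1 / q₀) * ∫ x in (0:ℝ)..1, ((w x) ^ 2 + q x * (v1 x) ^ 2) := by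
  have cv : Continuous v := continuous_iff_continuousAt.2 fun x => (dv x).continuousAt
  have hB : q₀ * (∫ x in (0:ℝ)..1, (v1 x) ^ 2) ≤ ∫ x in (0:ℝ)..1, q x * (v1 x) ^ 2 := by
    rw [← intervalIntegral.integral_const_mul]
    exact intervalIntegral.integral_mono_on zero_le_one
      (Continuous.intervalIntegrable (by fun_prop) _ _)
      (Continuous.intervalIntegrable (by fun_prop) _ _)
      fun x hx => mul_le_mul_of_nonneg_right (hq x hx) (sq_nonneg _)
  set I := ∫ x in (0:ℝ)..1, (v1 x) ^ 2 with hI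
  have h1 : |∫ x in (0:ℝ)..1, (x * (v1 x * w x) + θ * (v x * w x))|
      ≤ ∫ x in (0:ℝ)..1, ((w x) ^ 2 + ((v1 x) ^ 2 / 2 + I / 2)) := by
    refine (intervalIntegral.abs_integral_le_integral_abs zero_le_one).trans
      (intervalIntegral.integral_mono_on zero_le_one
        (Continuous.intervalIntegrable (by fun_prop) _ _)
        (Continuous.intervalIntegrable (by fun_prop) _ _) fun x hx => ?_)
    have hv := sq_le_integral_deriv_sq dv cv1 v0 hx
    have e1 : |x * (v1 x * w x)| ≤ ((v1 x) ^ 2 + (w x) ^ 2) / 2 := by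
      rw [abs_mul, abs_of_nonneg hx.1]
      have : |v1 x * w x| ≤ ((v1 x) ^ 2 + (w x) ^ 2) / 2 :=
        abs_le.2 ⟨by nlinarith [sq_nonneg (v1 x + w x)], by nlinarith [sq_nonneg (v1 x - w x)]⟩
      exact (mul_le_of_le_one_left (abs_nonneg _) hx.2).trans this
    have e2 : |θ * (v x * w x)| ≤ ((v x) ^ 2 + (w x) ^ 2) / 2 := by
      rw [abs_mul, abs_of_nonneg hθ]
      have : |v x * w x| ≤ ((v x) ^ 2 + (w x) ^ 2) / 2 :=
        abs_le.2 ⟨by nlinarith [sq_nonneg (v x + w x)], by nlinarith [sq_nonneg (v x - w x)]⟩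
      exact (mul_le_of_le_one_left (abs_nonneg _) hθ1).trans this
    have := abs_add_le (x * (v1 x * w x)) (θ * (v x * w x))
    linarith
  have h2 : ∫ x in (0:ℝ)..1, ((w x) ^ 2 + ((v1 x) ^ 2 / 2 + I / 2))
      = (∫ x in (0:ℝ)..1, (w x) ^ 2) + I := by
    rw [intervalIntegral.integral_add (Continuous.intervalIntegrable (by fun_prop) _ _)
        (Continuous.intervalIntegrable (by fun_prop) _ _),
      intervalIntegral.integral_add (Continuous.intervalIntegrable (by fun_prop) _ _)
        (Continuous.intervalIntegrable (by fun_prop) _ _), intervalIntegral.integral_div,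
      ← hI, intervalIntegral.integral_const]
    simp
  rw [h2] at h1
  have h3 : ∫ x in (0:ℝ)..1, ((w x) ^ 2 + q x * (v1 x) ^ 2)
      = (∫ x in (0:ℝ)..1, (w x) ^ 2) + ∫ x in (0:ℝ)..1, q x * (v1 x) ^ 2 :=
    intervalIntegral.integral_add (Continuous.intervalIntegrable (by fun_prop) _ _)
      (Continuous.intervalIntegrable (by fun_prop) _ _)
  rw [h3]
  refine h1.trans ?_
  have hA : 0 ≤ ∫ x in (0:ℝ)..1, (w x) ^ 2 :=
    intervalIntegral.integral_nonneg zero_le_one fun _ _ => sq_nonneg _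
  have hI0 : 0 ≤ I := intervalIntegral.integral_nonneg zero_le_one fun _ _ => sq_nonneg _
  have hB' : I ≤ 1 / q₀ * ∫ x in (0:ℝ)..1, q x * (v1 x) ^ 2 := by
    rw [one_div, inv_mul_eq_div, le_div_iff₀ hq₀]; linarith
  have hq1 : 0 < 1 / q₀ := by positivity
  nlinarith [mul_nonneg hq1.le hA, (mul_nonneg hq₀.le hI0).trans hB]

/-- Absorption of the boundary terms of the multiplier estimate and of the `a²` produced by the
weighted delay functional: `y = u_x(1,t)`, `v = u(1,t)`,
`a = u_t(1,t)`, `b = u_t(1,t-τ)`, and `A` is twice the mechanical energy. -/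
lemma absorb_boundary {κ₁ κ₂ q₀ η θ a b y v Q A : ℝ} (hκ : |κ₂| < κ₁) (hq₀ : 0 < q₀)
    (hη : 0 < η) (hθ : 0 ≤ θ) (hθ1 : θ ≤ 1) (hQ : q₀ ≤ Q) (hv : q₀ * v ^ 2 ≤ A) :
    a ^ 2 / 2 - y * (κ₁ * a + κ₂ * b) - Q * y ^ 2 / 2 - θ * (v * (κ₁ * a + κ₂ * b)) - η * A + a ^ 2
      ≤ (3 / 2 + κ₁ ^ 2 / q₀ + κ₁ ^ 2 / (η * q₀)) * (a ^ 2 + b ^ 2) - η / 2 * A := by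
  set K := κ₁ * a + κ₂ * b with hK
  have hk2 : κ₂ ^ 2 ≤ κ₁ ^ 2 := by
    rw [← sq_abs κ₂]
    exact pow_le_pow_left₀ (abs_nonneg _) hκ.le 2
  have hKsq : K ^ 2 ≤ 2 * κ₁ ^ 2 * (a ^ 2 + b ^ 2) := by
    have := mul_le_mul_of_nonneg_right hk2 (sq_nonneg b)
    rw [hK]
    nlinarith [sq_nonneg (κ₁ * a - κ₂ * b)]
  have y1 : -(y * K) - Q * y ^ 2 / 2 ≤ K ^ 2 / (2 * q₀) := by
    have e : K ^ 2 / (2 * q₀) = q₀ / 2 * (K / q₀) ^ 2 := by field_simp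
    have h2 : y * K = q₀ * (y * (K / q₀)) := by field_simp
    rw [e, h2]
    nlinarith [mul_nonneg hq₀.le (sq_nonneg (y + K / q₀)),
      mul_le_mul_of_nonneg_right hQ (sq_nonneg y)]
  have hηq : 0 < η * q₀ := mul_pos hη hq₀
  have y2 : -(θ * (v * K)) ≤ η * q₀ / 2 * v ^ 2 + K ^ 2 / (2 * (η * q₀)) := by
    have e : K ^ 2 / (2 * (η * q₀)) = η * q₀ / 2 * (K / (η * q₀)) ^ 2 := by field_simp
    have e2 : K = η * q₀ * (K / (η * q₀)) := by field_simp
    rw [e]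
    set k := K / (η * q₀)
    have h1 : θ ^ 2 ≤ 1 := by nlinarith
    have h2 : -(θ * (v * K)) = -(η * q₀ * (v * (θ * k))) := by
      rw [e2]; ring
    rw [h2]
    nlinarith [mul_nonneg hηq.le (sq_nonneg (v + θ * k)),
      mul_nonneg hηq.le (mul_nonneg (sub_nonneg.2 h1) (sq_nonneg k))]
  have z1 : K ^ 2 / (2 * q₀) ≤ κ₁ ^ 2 / q₀ * (a ^ 2 + b ^ 2) := by
    rw [div_mul_eq_mul_div, div_le_div_iff₀ (by positivity) hq₀]
    nlinarith
  have z2 : K ^ 2 / (2 * (η * q₀)) ≤ κ₁ ^ 2 / (η * q₀) * (a ^ 2 + b ^ 2) := by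
    rw [div_mul_eq_mul_div, div_le_div_iff₀ (by positivity) hηq]
    nlinarith
  nlinarith [mul_le_mul_of_nonneg_left hv hη.le, sq_nonneg b]

/-- Exponential decay with a prefactor, rewritten with the rate constant `M`. -/
lemma exists_rate {C δ : ℝ} (hC : 1 ≤ C) (hδ : 0 < δ) :
    ∃ M : ℝ, 0 < M ∧ ∀ t, M ≤ t →
      C * Real.exp (-(δ * t)) ≤ Real.exp (1 - t / M) := by
  have hlog : 0 ≤ Real.log C := Real.log_nonneg hC
  have hM : 0 < (1 + Real.log C) / δ := by positivity
  refine ⟨(1 + Real.log C) / δ, hM, fun t ht => ?_⟩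
  set M := (1 + Real.log C) / δ with hMd
  rw [← Real.exp_log (lt_of_lt_of_le one_pos hC), ← Real.exp_add, Real.exp_le_exp]
  have hδM : δ = (1 + Real.log C) * (1 / M) := by rw [hMd]; field_simp
  have h1 : 1 ≤ t / M := (one_le_div hM).2 ht
  have h2 : δ * t = (1 + Real.log C) * (t / M) := by
    rw [hδM]; ring
  rw [h2]
  nlinarith

/-! ### The Lyapunov argument -/

/-- Uniform exponential decay of the energy for the degenerate Euler–Bernoulli beam with
axial force and time-delayed boundary feedback: under the gain condition `κ₁ > |κ₂|`,
`|κ₂| ≤ γ ≤ 2κ₁ - |κ₂|` and the structural condition `max{ι_σ, q₂/q₀} < 2`, there is a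
constant `M > 0`, independent of the solution, such that every smooth solution satisfies
`E(t) ≤ e^{1 - t/M} E(0)` for all `t ≥ M`. -/
theorem exponential_stability_delayed_degenerate_beam
    (τ κ₁ κ₂ γ : ℝ) (hτ : 0 < τ) (hκ₂ : κ₂ ≠ 0) (hκ : |κ₂| < κ₁)
    (hγ₁ : |κ₂| ≤ γ) (hγ₂ : γ ≤ 2 * κ₁ - |κ₂|)
    (q : ℝ → ℝ) (q₀ q₁ q₂ : ℝ) (hq₀ : 0 < q₀) (hq_smooth : ContDiff ℝ 1 q)
    (hq_bound : ∀ x ∈ Set.Icc (0:ℝ) 1, q₀ ≤ q x ∧ q x ≤ q₁)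
    (hq' : ∀ x ∈ Set.Icc (0:ℝ) 1, |deriv q x| ≤ q₂)
    (σ : ℝ → ℝ) (hσ_smooth : ContDiff ℝ 2 σ) (hσ0 : σ 0 = 0)
    (hσ_pos : ∀ x ∈ Set.Ioc (0:ℝ) 1, 0 < σ x)
    (ισ : ℝ) (hισ : 0 ≤ ισ)
    (hσ_bound : ∀ x ∈ Set.Ioc (0:ℝ) 1, x * |deriv σ x| ≤ ισ * σ x)
    (hι : max ισ (q₂ / q₀) < 2) :
    ∃ M : ℝ, 0 < M ∧
      ∀ u : ℝ → ℝ → ℝ, ContDiff ℝ (⊤ : ℕ∞) (Function.uncurry u) →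
        (∀ x ∈ Set.Ioo (0:ℝ) 1, ∀ t, 0 < t →
          pdt (pdt u) x t
            + pdx (pdx (fun y s => σ y * pdx (pdx u) y s)) x t
            - pdx (fun y s => q y * pdx u y s) x t = 0) →
        (∀ t : ℝ, u 0 t = 0) →
        (∀ t : ℝ, pdx u 0 t = 0) →
        (∀ t : ℝ, pdx (pdx u) 1 t = 0) →
        (∀ t : ℝ, pdx (fun y s => σ y * pdx (pdx u) y s) 1 t - q 1 * pdx u 1 t
          = κ₁ * pdt u 1 t + κ₂ * pdt u 1 (t - τ)) →
        ∀ t, M ≤ t →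
          beamEnergy σ q γ τ u t ≤ Real.exp (1 - t / M) * beamEnergy σ q γ τ u 0 := by
  obtain ⟨c, hc, hdiss⟩ := boundary_dissipation hκ₂ hκ hγ₁ hγ₂
  have hγ : 0 < γ := lt_of_lt_of_le (abs_pos.2 hκ₂) hγ₁
  obtain ⟨m, hm⟩ : ∃ m, m = max ισ (q₂ / q₀) := ⟨_, rfl⟩
  rw [← hm] at hι
  have hmσ : ισ ≤ m := hm ▸ le_max_left _ _
  have hmq : q₂ / q₀ ≤ m := hm ▸ le_max_right _ _
  have hm0 : 0 ≤ m := hισ.trans hmσ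
  have hσn : ∀ x ∈ Set.Icc (0:ℝ) 1, 0 ≤ σ x := fun x hx => by
    rcases hx.1.eq_or_lt with h | h
    · rw [← h, hσ0]
    · exact (hσ_pos x ⟨h, hx.2⟩).le
  have hσm : ∀ x ∈ Set.Icc (0:ℝ) 1, x * deriv σ x ≤ m * σ x := fun x hx => by
    rcases hx.1.eq_or_lt with h | h
    · rw [← h, hσ0]; simp
    · exact (mul_le_mul_of_nonneg_left (le_abs_self _) hx.1).trans
        ((hσ_bound x ⟨h, hx.2⟩).trans (mul_le_mul_of_nonneg_right hmσ (hσn x hx)))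
  have hqm : ∀ x ∈ Set.Icc (0:ℝ) 1, x * deriv q x ≤ m * q x := fun x hx => by
    have h1 : x * deriv q x ≤ q₂ :=
      ((mul_le_mul_of_nonneg_left (le_abs_self _) hx.1).trans
        (mul_le_of_le_one_left (abs_nonneg _) hx.2)).trans (hq' x hx)
    have h2 : q₂ ≤ m * q₀ := (div_le_iff₀ hq₀).1 hmq
    exact h1.trans (h2.trans (mul_le_mul_of_nonneg_left (hq_bound x hx).1 hm0))
  have hqn : ∀ x ∈ Set.Icc (0:ℝ) 1, 0 ≤ q x := fun x hx => hq₀.le.trans (hq_bound x hx).1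
  have cσ := hσ_smooth.continuous
  have cq := hq_smooth.continuous
  obtain ⟨η, hη⟩ : ∃ η, η = 1 / 2 - m / 4 := ⟨_, rfl⟩
  have hη0 : 0 < η := by linarith
  -- `B` controls the cross terms, `C₁` the boundary terms; `N` dominates both
  obtain ⟨B, hB⟩ : ∃ B, B = 1 + 1 / q₀ := ⟨_, rfl⟩
  have hB0 : 0 < B := by rw [hB]; positivity
  obtain ⟨C₁, hC₁⟩ : ∃ C, C = 3 / 2 + κ₁ ^ 2 / q₀ + κ₁ ^ 2 / (η * q₀) := ⟨_, rfl⟩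
  have hC₁0 : 0 < C₁ := by rw [hC₁]; positivity
  obtain ⟨N, hN⟩ : ∃ N, N = 1 + 2 * B + C₁ / c := ⟨_, rfl⟩
  have hNc : C₁ ≤ N * c := by
    have : C₁ / c * c = C₁ := by field_simp
    rw [hN]; nlinarith
  have hNB : 1 + 2 * B ≤ N := by
    have : 0 < C₁ / c := by positivity
    linarith
  obtain ⟨C₂, hC₂⟩ : ∃ C, C = N + 2 * B + 2 / γ := ⟨_, rfl⟩
  have hγi : 0 < 2 / γ := by positivity
  have hC₂1 : 1 ≤ C₂ := by linarith
  obtain ⟨δ, hδ⟩ : ∃ δ, δ = min η (2 / (γ * τ)) / C₂ := ⟨_, rfl⟩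
  have hγτ : 0 < γ * τ := mul_pos hγ hτ
  have hmin : 0 < min η (2 / (γ * τ)) := lt_min hη0 (by positivity)
  have hδ0 : 0 < δ := by rw [hδ]; exact div_pos hmin (by linarith)
  have hδC : δ * C₂ = min η (2 / (γ * τ)) := by
    rw [hδ]; exact div_mul_cancel₀ _ (by linarith)
  obtain ⟨M, hM, hrate⟩ := exists_rate hC₂1 hδ0
  refine ⟨M, hM, fun u hu hpde hu0 hu0' hu1 hbc t ht => ?_⟩
  -- the pieces of the Lyapunov function
  set A : ℝ → ℝ := fun t => ∫ x in (0:ℝ)..1,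
    ((pdt u x t) ^ 2 + σ x * (pdx (pdx u) x t) ^ 2 + q x * (pdx u x t) ^ 2) with hA
  set P : ℝ → ℝ := fun t => ∫ s in (0:ℝ)..1, (pdt u 1 (t - τ * s)) ^ 2 with hP
  set X : ℝ → ℝ := fun t => ∫ x in (0:ℝ)..1,
    (x * (pdx u x t * pdt u x t) + m / 4 * (u x t * pdt u x t)) with hX
  set D : ℝ → ℝ := fun t => τ * ∫ s in (0:ℝ)..1, (1 - s) * (pdt u 1 (t - τ * s)) ^ 2 with hD
  have hE : ∀ t, beamEnergy σ q γ τ u t = (A t + γ * τ * P t) / 2 := fun t => by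
    simp only [beamEnergy, hA, hP]; ring
  have hp : ∀ r, HasDerivAt (fun r => pdt u 1 r) (pdt (pdt u) 1 r) r := fun r =>
    hasDerivAt_pdt (contDiff_pdt hu) 1 r
  have cp : Continuous fun r => pdt u 1 r :=
    continuous_iff_continuousAt.2 fun r => (hp r).continuousAt
  have cp' : Continuous fun r => pdt (pdt u) 1 r :=
    continuous_iff_continuousAt.2 fun r =>
      (hasDerivAt_pdt (contDiff_pdt (contDiff_pdt hu)) 1 r).continuousAt
  have hP0 : ∀ t, 0 ≤ P t := fun t =>
    intervalIntegral.integral_nonneg zero_le_one fun _ _ => sq_nonneg _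
  have hD0 : ∀ t, 0 ≤ D t := fun t => mul_nonneg hτ.le
    (intervalIntegral.integral_nonneg zero_le_one fun s hs =>
      mul_nonneg (sub_nonneg.2 hs.2) (sq_nonneg _))
  have hDP : ∀ t, D t ≤ τ * P t := fun t => mul_le_mul_of_nonneg_left
    (intervalIntegral.integral_mono_on zero_le_one
      (Continuous.intervalIntegrable (by fun_prop) _ _)
      (Continuous.intervalIntegrable (by fun_prop) _ _)
      fun s hs => mul_le_of_le_one_left (sq_nonneg _) (by linarith [hs.1])) hτ.le
  have cslice : ∀ t, Continuous (fun x => pdt u x t) ∧ Continuous (fun x => pdx u x t) ∧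
      Continuous (fun x => pdx (pdx u) x t) := fun t =>
    ⟨continuous_slice (contDiff_pdt hu) t, continuous_slice (contDiff_pdx hu) t,
      continuous_slice (contDiff_pdx (contDiff_pdx hu)) t⟩
  have hA0 : ∀ t, 0 ≤ A t := fun t =>
    intervalIntegral.integral_nonneg zero_le_one fun x hx =>
      add_nonneg (add_nonneg (sq_nonneg _) (mul_nonneg (hσn x hx) (sq_nonneg _)))
        (mul_nonneg (hqn x hx) (sq_nonneg _))
  have hXA : ∀ t, |X t| ≤ B * A t := fun t => by
    obtain ⟨c1, c2, c3⟩ := cslice t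
    rw [hB]
    refine (abs_cross_le (v := fun x => u x t) (v1 := fun x => pdx u x t)
      (fun x => hasDerivAt_pdx hu x t) c2 (hu0 t) c1 cq hq₀
      (fun x hx => (hq_bound x hx).1) (by linarith) (by linarith)).trans
      (mul_le_mul_of_nonneg_left ?_ (by positivity))
    refine intervalIntegral.integral_mono_on zero_le_one
      (Continuous.intervalIntegrable (by fun_prop) _ _)
      (Continuous.intervalIntegrable (by fun_prop) _ _) fun x hx => ?_
    have := mul_nonneg (hσn x hx) (sq_nonneg (pdx (pdx u) x t))
    linarith
  have hv : ∀ t, q₀ * (u 1 t) ^ 2 ≤ A t := fun t => by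
    obtain ⟨c1, c2, c3⟩ := cslice t
    refine (mul_le_mul_of_nonneg_left (sq_le_integral_deriv_sq
      (v := fun x => u x t) (v1 := fun x => pdx u x t)
      (fun x => hasDerivAt_pdx hu x t) c2 (hu0 t) (x := 1) (by simp)) hq₀.le).trans ?_
    rw [← intervalIntegral.integral_const_mul]
    refine intervalIntegral.integral_mono_on zero_le_one
      (Continuous.intervalIntegrable (by fun_prop) _ _)
      (Continuous.intervalIntegrable (by fun_prop) _ _) fun x hx => ?_
    have h1 := mul_nonneg (hσn x hx) (sq_nonneg (pdx (pdx u) x t))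
    have h2 := mul_le_mul_of_nonneg_right (hq_bound x hx).1 (sq_nonneg (pdx u x t))
    have h3 := sq_nonneg (pdt u x t)
    linarith
  have hdL : ∀ t, HasDerivAt
      (fun t => N * ((A t + γ * (τ * P t)) / 2) + X t + D t) _ t := fun t =>
    ((((hasDerivAt_mechanical hu cσ cq t).add
      ((hasDerivAt_delay hp cp' τ t).const_mul γ)).div_const 2).const_mul N |>.add
      (hasDerivAt_cross hu (m / 4) t)).add (hasDerivAt_delay_weighted hp cp' τ t)
  have hlow : ∀ t, beamEnergy σ q γ τ u t ≤ N * ((A t + γ * (τ * P t)) / 2) + X t + D t := by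
    intro t
    rw [hE]
    have h1 := (abs_le.1 (hXA t)).1
    have h2 := mul_nonneg hγτ.le (hP0 t)
    nlinarith [hA0 t, hD0 t, mul_nonneg (sub_nonneg.2 hNB) (add_nonneg (hA0 t) h2),
      mul_nonneg hB0.le h2]
  have hup : ∀ t, N * ((A t + γ * (τ * P t)) / 2) + X t + D t
      ≤ C₂ * beamEnergy σ q γ τ u t := by
    intro t
    rw [hE, hC₂]
    have h1 := (abs_le.1 (hXA t)).2
    have h2 := mul_nonneg hγτ.le (hP0 t)
    have h3 : 2 / γ * ((A t + γ * τ * P t) / 2) = A t / γ + τ * P t := by field_simp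
    have h4 : 0 ≤ A t / γ := div_nonneg (hA0 t) hγ.le
    have h5 := hDP t
    nlinarith [mul_nonneg hB0.le h2]
  have hdecay := exp_decay_of_deriv_le (δ := δ) hdL (fun s hs => ?_) (hM.le.trans ht)
  · calc beamEnergy σ q γ τ u t ≤ _ := hlow t
      _ ≤ _ := hdecay
      _ ≤ Real.exp (-(δ * t)) * (C₂ * beamEnergy σ q γ τ u 0) :=
        mul_le_mul_of_nonneg_left (hup 0) (Real.exp_pos _).le
      _ = (C₂ * Real.exp (-(δ * t))) * beamEnergy σ q γ τ u 0 := by ring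
      _ ≤ _ := mul_le_mul_of_nonneg_right (hrate t ht) (by
        rw [hE]
        have := mul_nonneg hγτ.le (hP0 0)
        linarith [hA0 0])
  · have hsl := beamSlice_of_solution hu (fun x hx => hpde x hx s hs) hu0 hu0' hu1 (hbc s)
    have e1 := hsl.energy hσ_smooth hσ0 hq_smooth
    have e2 := hsl.multiplier hσ_smooth hσ0 hq_smooth hσn hσm hqm
    rw [← hη] at e2
    have e3 := absorb_boundary (a := pdt u 1 s) (b := pdt u 1 (s - τ)) (y := pdx u 1 s)
      (Q := q 1) (θ := m / 4) hκ hq₀ hη0 (by linarith) (by linarith)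
      (hq_bound 1 (by simp)).1 (hv s)
    rw [← hC₁] at e3
    have e4 := hdiss (pdt u 1 s) (pdt u 1 (s - τ))
    have e5 := hup s
    rw [hE] at e5
    have hN0 : 0 < N := by linarith
    have e6 := mul_le_mul_of_nonneg_left e4 hN0.le
    have e7 := mul_le_mul_of_nonneg_right hNc
      (add_nonneg (sq_nonneg (pdt u 1 s)) (sq_nonneg (pdt u 1 (s - τ))))
    have e8 := mul_le_mul_of_nonneg_left e5 hδ0.le
    have e9 : δ * (C₂ * ((A s + γ * τ * P s) / 2)) ≤ η / 2 * A s + P s := by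
      rw [← mul_assoc, hδC]
      have f1 := mul_le_mul_of_nonneg_right (min_le_left η (2 / (γ * τ))) (hA0 s)
      have f2 := mul_le_mul_of_nonneg_right (min_le_right η (2 / (γ * τ)))
        (mul_nonneg hγτ.le (hP0 s))
      have f3 : 2 / (γ * τ) * (γ * τ * P s) = 2 * P s := by field_simp
      linarith
    rw [e1]
    change _ ≤ -δ * (N * ((A s + γ * (τ * P s)) / 2) + X s + D s)
    change _ ≤ _ - η * A s at e2
    change _ + (_ - P s) ≤ _
    linarith
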